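/- Fix t > 0, ξ > 0, y₀ > 0 and p > 1, and set η := 1/(2(p-1)) and χ(τ,p) := τ^{2p}·exp(-y₀^{2(1-p)}/(2ξ²t(1-p)²)) / ((p-1)ξ²t·Γ(1+η)·(2(1-p)²ξ²t)^η). Then for every k > 0 and every τ ∈ (0,1): | C(k,τ)·τ/(χ(τ,p)·J^{2p}(k)) - 1 | ≤ exp(y₀^{2-2p}/(2(p-1)²tξ²)) · ( J^{4p-2}(k)/(2ξ²t(1-p)²·J^{2p}(k)) + J^{3p-1}(k)/(ξ²t(1-p)²·y₀^{p-1}·J^{2p}(k)) ) · τ^{p-1}. In particular C(k,τ) = τ^{-1}·χ(τ,p)·J^{2p}(k)·(1 + O(τ^{p-1})) as τ → 0⁺. -/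

import Mathlib

/-- The standard normal cumulative distribution function. -/
noncomputable def Phi (x : ℝ) : ℝ :=
  ∫ s in Set.Iic x, Real.exp (-(s ^ 2) / 2) / Real.sqrt (2 * Real.pi)

/-- The Black–Scholes call price. -/
noncomputable def BS (k w T : ℝ) : ℝ :=
  Phi (-k / Real.sqrt (w * T) + Real.sqrt (w * T) / 2)
    - Real.exp k * Phi (-k / Real.sqrt (w * T) - Real.sqrt (w * T) / 2)

/-- The modified Bessel function of the first kind of order `ν`. -/
noncomputable def besselI (ν x : ℝ) : ℝ :=
  ∑' m : ℕ, (x / 2) ^ (2 * (m : ℝ) + ν) / ((m.factorial : ℝ) * Real.Gamma ((m : ℝ) + ν + 1))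


open MeasureTheory Set Filter Topology

lemma aux_int_phi : Integrable (fun s : ℝ => Real.exp (-(s ^ 2) / 2) / Real.sqrt (2 * Real.pi)) := by
  have h := (integrable_exp_neg_mul_sq (b := 1/2) (by norm_num)).div_const (Real.sqrt (2 * Real.pi))
  refine h.congr (Eventually.of_forall fun s => ?_)
  simp only
  congr 2; ring

lemma aux_phi_mono : Monotone Phi := by
  intro a b hab
  unfold Phi
  exact setIntegral_mono_set aux_int_phi.integrableOn
    (Eventually.of_forall fun s => by positivity) (Iic_subset_Iic.2 hab).eventuallyLE

lemma aux_phi_nonneg (x : ℝ) : 0 ≤ Phi x := by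
  unfold Phi
  exact integral_nonneg fun s => by positivity

lemma aux_phi_le_one (x : ℝ) : Phi x ≤ 1 := by
  unfold Phi
  calc _ ≤ ∫ s : ℝ, Real.exp (-(s ^ 2) / 2) / Real.sqrt (2 * Real.pi) :=
        setIntegral_le_integral aux_int_phi (Eventually.of_forall fun s => by positivity)
    _ = 1 := by
        rw [integral_div]
        have h := integral_gaussian (1/2)
        have e : (fun s : ℝ => Real.exp (-(s ^ 2) / 2)) = fun s : ℝ => Real.exp (-(1/2) * s ^ 2) := by
          funext s; congr 1; ring
        rw [e, h]
        have : Real.pi / (1/2) = 2 * Real.pi := by ring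
        rw [this]
        exact div_self (by positivity)

lemma aux_phi_tail (a : ℝ) (ha : 0 ≤ a) : ∃ K : ℝ, 0 ≤ K ∧ ∀ a : ℝ, 0 ≤ a → Phi (-a) ≤ K * Real.exp (-(a^2)/4) := by
  refine ⟨∫ s : ℝ, Real.exp (-(1/4) * s ^ 2) / Real.sqrt (2 * Real.pi), integral_nonneg fun s => by positivity, ?_⟩
  intro a ha
  unfold Phi
  have hi : Integrable (fun s : ℝ => Real.exp (-(1/4) * s ^ 2) / Real.sqrt (2 * Real.pi)) :=
    (integrable_exp_neg_mul_sq (b := 1/4) (by norm_num)).div_const _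
  calc _ ≤ ∫ s in Iic (-a), Real.exp (-(1/4) * s ^ 2) / Real.sqrt (2 * Real.pi) * Real.exp (-(a^2)/4) := by
        refine setIntegral_mono_on aux_int_phi.integrableOn (hi.mul_const _).integrableOn measurableSet_Iic ?_
        intro s hs
        have hs' : s ≤ -a := hs
        rw [div_mul_eq_mul_div, ← Real.exp_add]
        gcongr
        nlinarith
    _ ≤ ∫ s : ℝ, Real.exp (-(1/4) * s ^ 2) / Real.sqrt (2 * Real.pi) * Real.exp (-(a^2)/4) :=
        setIntegral_le_integral (hi.mul_const _) (Eventually.of_forall fun s => by positivity)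
    _ = _ := by rw [integral_mul_const]

lemma aux_bs_pos (k z : ℝ) (hk : 0 < k) (hz : 0 < z) : 0 < BS k z 1 := by
  unfold BS
  rw [mul_one]
  set σ := Real.sqrt z with hσ
  have hs : 0 < σ := Real.sqrt_pos.2 hz
  set d := -k / σ - σ / 2 with hd
  have e1 : -k / σ + σ / 2 = d + σ := by rw [hd]; ring
  rw [e1]
  have hshift : Phi (d + σ) = ∫ s in Iic d, Real.exp (-((s + σ) ^ 2) / 2) / Real.sqrt (2 * Real.pi) := by
    unfold Phi
    have := (measurePreserving_add_right volume σ).setIntegral_preimage_emb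
      (measurableEmbedding_addRight σ) (fun s : ℝ => Real.exp (-(s ^ 2) / 2) / Real.sqrt (2 * Real.pi)) (Iic (d + σ))
    rw [← this]
    congr 2
    ext s; simp
  have hi2 : Integrable (fun s : ℝ => Real.exp (-((s + σ) ^ 2) / 2) / Real.sqrt (2 * Real.pi)) :=
    aux_int_phi.comp_add_right σ
  rw [hshift]
  unfold Phi
  rw [← integral_const_mul, ← integral_sub hi2.integrableOn (aux_int_phi.const_mul _).integrableOn]
  have hdk : d * σ = -k - σ^2/2 := by rw [hd]; field_simp
  have key : ∀ s, s < d → 0 < Real.exp (-((s + σ) ^ 2) / 2) / Real.sqrt (2 * Real.pi) - Real.exp k * (Real.exp (-(s ^ 2) / 2) / Real.sqrt (2 * Real.pi)) := by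
    intro s hsd
    rw [← mul_div_assoc, ← Real.exp_add, ← sub_div]
    apply div_pos _ (by positivity)
    rw [sub_pos, Real.exp_lt_exp]
    nlinarith
  rw [integral_Iic_eq_integral_Iio]
  rw [setIntegral_pos_iff_support_of_nonneg_ae]
  · have : Iio d ⊆ Function.support (fun s => Real.exp (-((s + σ) ^ 2) / 2) / Real.sqrt (2 * Real.pi) - Real.exp k * (Real.exp (-(s ^ 2) / 2) / Real.sqrt (2 * Real.pi))) :=
      fun s hsd => (key s hsd).ne'
    rw [inter_eq_self_of_subset_right this]
    simp
  · exact (ae_restrict_iff' measurableSet_Iio).2 (Eventually.of_forall fun s hsd => (key s hsd).le)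
  · exact (hi2.sub (aux_int_phi.const_mul _)).integrableOn

lemma aux_bs_meas (k : ℝ) : Measurable (fun z => BS k z 1) := by
  have := aux_phi_mono.measurable
  unfold BS
  have hs : Measurable (fun z : ℝ => Real.sqrt (z * 1)) := by fun_prop
  exact (this.comp ((measurable_const.div hs).add (hs.div_const 2))).sub
    ((this.comp ((measurable_const.div hs).sub (hs.div_const 2))).const_mul _)

lemma aux_int_J (k q : ℝ) (hk : 0 < k) (hq : 1 < q) :
    IntegrableOn (fun z : ℝ => BS k z 1 * z ^ (-q)) (Ioi 0) := by
  have hm : Measurable (fun z : ℝ => BS k z 1 * z ^ (-q)) :=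
    (aux_bs_meas k).mul (by fun_prop)
  have hle : ∀ z, BS k z 1 ≤ Phi (-k / Real.sqrt z + Real.sqrt z / 2) := by
    intro z
    unfold BS
    rw [mul_one]
    have := mul_nonneg (Real.exp_pos k).le (aux_phi_nonneg (-k / Real.sqrt z - Real.sqrt z / 2))
    linarith
  rw [← Ioc_union_Ioi_eq_Ioi hk.le]
  refine IntegrableOn.union ?_ ?_
  · obtain ⟨K, hK, hb⟩ := aux_phi_tail 0 le_rfl
    set c := k^2/16 with hc
    have hc0 : 0 < c := by positivity
    refine Measure.integrableOn_of_bounded (M := K * (q/c)^q) (by simp) hm.aestronglyMeasurable ?_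
    refine (ae_restrict_iff' measurableSet_Ioc).2 (Eventually.of_forall fun z hz => ?_)
    have hz0 : 0 < z := hz.1
    have hs : 0 < Real.sqrt z := Real.sqrt_pos.2 hz0
    have hss : Real.sqrt z ^ 2 = z := Real.sq_sqrt hz0.le
    have h0 := aux_bs_pos k z hk hz0
    rw [Real.norm_of_nonneg (by positivity)]
    have h1 : BS k z 1 ≤ K * Real.exp (-(c / z)) := by
      refine (hle z).trans ?_
      have h2 : -k / Real.sqrt z + Real.sqrt z / 2 ≤ -(k / (2 * Real.sqrt z)) := by
        have : Real.sqrt z / 2 ≤ k / (2 * Real.sqrt z) := by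
          rw [div_le_div_iff₀ (by norm_num) (by positivity)]
          nlinarith [hz.2]
        have e : -k / Real.sqrt z = - (k / (2 * Real.sqrt z)) - (k / (2 * Real.sqrt z)) := by
          field_simp; ring
        linarith
      refine (aux_phi_mono h2).trans ((hb _ (by positivity)).trans (le_of_eq ?_))
      congr 2
      rw [div_pow, mul_pow, hss, hc]; field_simp; norm_num
    have h3 : Real.exp (-(c/z)) * z ^ (-q) ≤ (q/c)^q := by
      have h4 : c / z / q ≤ Real.exp (c / z / q) := by linarith [Real.add_one_le_exp (c/z/q)]
      have h5 : (c / z / q) ^ q ≤ Real.exp (c / z) := by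
        calc (c / z / q) ^ q ≤ (Real.exp (c / z / q)) ^ q := by gcongr
          _ = Real.exp (c/z) := by rw [← Real.exp_mul]; congr 1; field_simp
      have h6 : z ^ (-q) = (c/z/q)^q * (q/c)^q := by
        rw [← Real.mul_rpow (by positivity) (by positivity), Real.rpow_neg hz0.le, ← Real.inv_rpow hz0.le]
        congr 1; field_simp
      rw [h6, ← mul_assoc]
      have : Real.exp (-(c/z)) * (c/z/q)^q ≤ 1 := by
        calc _ ≤ Real.exp (-(c/z)) * Real.exp (c/z) := by gcongr
          _ = 1 := by rw [← Real.exp_add]; simp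
      exact mul_le_of_le_one_left (by positivity) this
    calc BS k z 1 * z^(-q) ≤ K * Real.exp (-(c / z)) * z ^ (-q) := by gcongr
      _ = K * (Real.exp (-(c / z)) * z ^ (-q)) := by ring
      _ ≤ _ := by gcongr
  · refine Integrable.mono' (integrableOn_Ioi_rpow_of_lt (a := -q) (by linarith) hk) hm.aestronglyMeasurable ?_
    refine (ae_restrict_iff' measurableSet_Ioi).2 (Eventually.of_forall fun z hz => ?_)
    have hz0 : 0 < z := hk.trans hz
    have h0 := aux_bs_pos k z hk hz0
    rw [Real.norm_of_nonneg (by positivity)]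
    exact mul_le_of_le_one_left (by positivity) ((hle z).trans (aux_phi_le_one _))

lemma aux_J_pos (k q : ℝ) (hk : 0 < k) (hq : 1 < q) :
    0 < ∫ z in Ioi (0:ℝ), BS k z 1 * z ^ (-q) := by
  have key : ∀ z : ℝ, 0 < z → 0 < BS k z 1 * z ^ (-q) := fun z hz => 
    mul_pos (aux_bs_pos k z hk hz) (by positivity)
  rw [setIntegral_pos_iff_support_of_nonneg_ae]
  · have : Ioi (0:ℝ) ⊆ Function.support (fun z => BS k z 1 * z ^ (-q)) :=
      fun s hsd => (key s hsd).ne'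
    rw [inter_eq_self_of_subset_right this]
    simp
  · exact (ae_restrict_iff' measurableSet_Ioi).2 (Eventually.of_forall fun s hsd => (key s hsd).le)
  · exact aux_int_J k q hk hq

noncomputable def auxR (η x : ℝ) : ℝ :=
  ∑' m : ℕ, (x / 2) ^ (2 * m) * (Real.Gamma (1 + η) / ((m.factorial : ℝ) * Real.Gamma ((m : ℝ) + η + 1)))

lemma aux_gamma (η : ℝ) (hη : 0 < η) (m : ℕ) :
    (m.factorial : ℝ) * Real.Gamma (1 + η) ≤ Real.Gamma (m + η + 1) := by
  induction m with
  | zero => simp [add_comm]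
  | succ n ih =>
    have e : ((n + 1 : ℕ) : ℝ) + η + 1 = (n + η + 1) + 1 := by push_cast; ring
    rw [e, Real.Gamma_add_one (by positivity), Nat.factorial_succ]
    push_cast
    have : 0 < Real.Gamma (1 + η) := Real.Gamma_pos_of_pos (by positivity)
    calc ((n:ℝ) + 1) * n.factorial * Real.Gamma (1 + η) = (n+1) * (n.factorial * Real.Gamma (1 + η)) := by ring
      _ ≤ (n + η + 1) * Real.Gamma (n + η + 1) := by
        gcongr
        linarith

lemma aux_term (η x : ℝ) (hη : 0 < η) (m : ℕ) :
    0 ≤ (x / 2) ^ (2 * m) * (Real.Gamma (1 + η) / ((m.factorial : ℝ) * Real.Gamma ((m : ℝ) + η + 1))) ∧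
    (x / 2) ^ (2 * m) * (Real.Gamma (1 + η) / ((m.factorial : ℝ) * Real.Gamma ((m : ℝ) + η + 1)))
      ≤ x ^ (2 * m) / ((2 * m).factorial : ℝ) := by
  have g1 : 0 < Real.Gamma (1 + η) := Real.Gamma_pos_of_pos (by positivity)
  have g2 : 0 < Real.Gamma (m + η + 1) := Real.Gamma_pos_of_pos (by positivity)
  have hx : 0 ≤ x ^ (2 * m) := by rw [pow_mul]; positivity
  have hx2 : 0 ≤ (x/2) ^ (2 * m) := by rw [pow_mul]; positivity
  refine ⟨by positivity, ?_⟩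
  have h1 : Real.Gamma (1 + η) / ((m.factorial : ℝ) * Real.Gamma ((m : ℝ) + η + 1)) ≤ 1 / ((m.factorial : ℝ) * m.factorial) := by
    rw [div_le_div_iff₀ (by positivity) (by positivity)]
    nlinarith [aux_gamma η hη m, (by positivity : (0:ℝ) < m.factorial)]
  have h2 : ((2*m).factorial : ℝ) ≤ 4 ^ m * (m.factorial * m.factorial) := by
    have h3 := Nat.choose_mul_factorial_mul_factorial (show m ≤ 2 * m by omega)
    have h4 : (2*m).choose m ≤ 4 ^ m := by
      have := Nat.choose_le_two_pow (2*m) m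
      rwa [pow_mul] at this
    have h5 : 2 * m - m = m := by omega
    rw [h5] at h3
    have : (2*m).factorial ≤ 4 ^ m * (m.factorial * m.factorial) := by
      rw [← h3, mul_assoc]; gcongr
    exact_mod_cast this
  calc _ ≤ (x/2)^(2*m) * (1 / ((m.factorial : ℝ) * m.factorial)) := by gcongr
    _ = x ^ (2*m) / (4 ^ m * (m.factorial * m.factorial)) := by
      rw [div_pow, pow_mul 2]; norm_num; field_simp
    _ ≤ _ := by gcongr

lemma aux_summable (η x : ℝ) (hη : 0 < η) : Summable (fun m : ℕ => (x / 2) ^ (2 * m) * (Real.Gamma (1 + η) / ((m.factorial : ℝ) * Real.Gamma ((m : ℝ) + η + 1)))) :=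
  Summable.of_nonneg_of_le (fun m => (aux_term η x hη m).1) (fun m => (aux_term η x hη m).2) (Real.hasSum_cosh x).summable

lemma auxR_le (η x : ℝ) (hη : 0 < η) (hx : 0 ≤ x) : auxR η x ≤ Real.exp x := by
  have h1 : auxR η x ≤ Real.cosh x := by
    rw [← (Real.hasSum_cosh x).tsum_eq]
    exact (aux_summable η x hη).tsum_le_tsum (fun m => (aux_term η x hη m).2) (Real.hasSum_cosh x).summable
  have h2 := Real.cosh_add_sinh x
  have h3 := Real.sinh_nonneg_iff.2 hx
  linarith

lemma auxR_ge (η x : ℝ) (hη : 0 < η) : 1 ≤ auxR η x := by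
  have g1 : 0 < Real.Gamma (1 + η) := Real.Gamma_pos_of_pos (by positivity)
  have := (aux_summable η x hη).le_tsum 0 (fun m _ => (aux_term η x hη m).1)
  refine le_trans (le_of_eq ?_) this
  simp [add_comm η 1, g1.ne']

lemma auxR_meas (η : ℝ) (hη : 0 < η) : Measurable (auxR η) := by
  refine measurable_of_tendsto_metrizable (f := fun n x => ∑ m ∈ Finset.range n, (x / 2) ^ (2 * m) * (Real.Gamma (1 + η) / ((m.factorial : ℝ) * Real.Gamma ((m : ℝ) + η + 1)))) (fun n => by fun_prop) ?_
  rw [tendsto_pi_nhds]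
  intro x
  exact (aux_summable η x hη).hasSum.tendsto_sum_nat

lemma aux_bessel (η x : ℝ) (hη : 0 < η) (hx : 0 < x) :
    besselI η x = (x / 2) ^ η / Real.Gamma (1 + η) * auxR η x := by
  have g1 : 0 < Real.Gamma (1 + η) := Real.Gamma_pos_of_pos (by positivity)
  unfold besselI auxR
  rw [← tsum_mul_left]
  congr 1; funext m
  have e : (x/2) ^ (2 * (m:ℝ) + η) = (x/2)^(2*m) * (x/2)^η := by
    rw [Real.rpow_add (by positivity), ← Real.rpow_natCast]; push_cast; rfl
  rw [e]
  field_simp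

/-- pointwise core inequality -/
lemma aux_core (u x B R : ℝ) (hu : 0 ≤ u) (hx : 0 ≤ x) (hB : 0 ≤ B) (hxu : x ≤ u + B)
    (hR1 : 1 ≤ R) (hR2 : R ≤ Real.exp x) :
    |Real.exp (-u) * R - 1| ≤ Real.exp B * (u + x) := by
  have hB1 : 1 ≤ Real.exp B := Real.one_le_exp hB
  rw [abs_le]
  constructor
  · have h1 : 1 - u ≤ Real.exp (-u) := by linarith [Real.add_one_le_exp (-u)]
    have h2 : Real.exp (-u) ≤ Real.exp (-u) * R := le_mul_of_one_le_right (Real.exp_pos _).le hR1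
    nlinarith
  · have h0 : Real.exp (-u) ≤ 1 := Real.exp_le_one_iff.2 (by linarith)
    have h1 : Real.exp (-u) * R ≤ Real.exp (-u) * Real.exp x := by gcongr
    have h2 : Real.exp x - 1 ≤ x * Real.exp x := by
      have h3 : 1 - x ≤ Real.exp (-x) := by linarith [Real.add_one_le_exp (-x)]
      have h4 : Real.exp (-x) * Real.exp x = 1 := by rw [← Real.exp_add]; simp
      nlinarith [Real.exp_pos x]
    have h5 : Real.exp (-u) * Real.exp x ≤ Real.exp B := by
      rw [← Real.exp_add]; exact Real.exp_le_exp.2 (by linarith)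
    have h6 : Real.exp (-u) * (Real.exp x - 1) ≤ Real.exp (-u) * (x * Real.exp x) := by gcongr
    nlinarith [mul_le_mul_of_nonneg_left h5 hx, mul_nonneg (Real.exp_pos B).le hu]

theorem stmt_7 (t ξ y0 p : ℝ) (ht : 0 < t) (hξ : 0 < ξ) (hy0 : 0 < y0) (hp : 1 < p)
    (k : ℝ) (hk : 0 < k) (τ : ℝ) (hτ : τ ∈ Set.Ioo (0 : ℝ) 1) :
    let η : ℝ := 1 / (2 * (p - 1))
    -- the CEV density (case `p > 1`)
    let ζ : ℝ → ℝ := fun z =>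
      Real.sqrt y0 * z ^ ((1 : ℝ) / 2 - 2 * p) / ((p - 1) * ξ ^ 2 * t)
        * Real.exp (-(z ^ (2 * (1 - p)) + y0 ^ (2 * (1 - p))) / (2 * ξ ^ 2 * t * (1 - p) ^ 2))
        * besselI η ((y0 * z) ^ (1 - p) / ((1 - p) ^ 2 * ξ ^ 2 * t))
    let χ : ℝ := τ ^ (2 * p) * Real.exp (-(y0 ^ (2 * (1 - p))) / (2 * ξ ^ 2 * t * (1 - p) ^ 2))
        / ((p - 1) * ξ ^ 2 * t * Real.Gamma (1 + η) * (2 * (1 - p) ^ 2 * ξ ^ 2 * t) ^ η)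
    -- the call price
    let C : ℝ := ∫ y in Set.Ioi (0 : ℝ), BS k y τ * ζ y
    -- the maturity-independent integrals `J^q(k)`
    let J : ℝ → ℝ := fun q => ∫ y in Set.Ioi (0 : ℝ), BS k y 1 * y ^ (-q)
    |C * τ / (χ * J (2 * p)) - 1|
      ≤ Real.exp (y0 ^ (2 - 2 * p) / (2 * (p - 1) ^ 2 * t * ξ ^ 2))
        * (J (4 * p - 2) / (2 * ξ ^ 2 * t * (1 - p) ^ 2 * J (2 * p))
          + J (3 * p - 1) / (ξ ^ 2 * t * (1 - p) ^ 2 * y0 ^ (p - 1) * J (2 * p)))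
        * τ ^ (p - 1) := by
  intro η ζ χ C J
  obtain ⟨hτ0, hτ1⟩ := hτ
  have hp1 : 0 < p - 1 := by linarith
  have hη : 0 < η := by positivity
  have hηp : (1 - p) * η = -(1/2) := by
    simp only [η]; field_simp; ring
  set c : ℝ := (1 - p) ^ 2 * ξ ^ 2 * t with hc
  have hsq : 0 < (1 - p) ^ 2 := by nlinarith
  have hc0 : 0 < c := by positivity
  have hJ : 0 < J (2 * p) := aux_J_pos k (2 * p) hk (by linarith)
  have g1 : 0 < Real.Gamma (1 + η) := Real.Gamma_pos_of_pos (by positivity)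
  have hχ : 0 < χ := by
    simp only [χ]
    have : 0 < (2 * (1 - p) ^ 2 * ξ ^ 2 * t) := by positivity
    positivity
  set B : ℝ := y0 ^ (2 - 2 * p) / (2 * c) with hB
  have hB0 : 0 ≤ B := by positivity
  have eB : y0 ^ (2 - 2 * p) / (2 * (p - 1) ^ 2 * t * ξ ^ 2) = B := by
    rw [hB, hc]; congr 1; ring
  set u : ℝ → ℝ := fun z => (z / τ) ^ (2 - 2 * p) / (2 * c) with hu
  set x : ℝ → ℝ := fun z => (y0 * (z / τ)) ^ (1 - p) / c with hx
  set G : ℝ → ℝ := fun z => BS k z 1 * z ^ (-(2 * p)) * (Real.exp (-(u z)) * auxR η (x z)) with hG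
  have hGm : Measurable G := by
    have h1 : Measurable u := by rw [hu]; fun_prop
    have h2 : Measurable x := by rw [hx]; fun_prop
    exact ((aux_bs_meas k).mul (by fun_prop)).mul ((by fun_prop : Measurable fun z => Real.exp (-(u z))).mul ((auxR_meas η hη).comp h2))
  -- the change of variables
  have hCeq : C = τ⁻¹ * (χ * ∫ z in Ioi (0:ℝ), G z) := by
    have h1 : C = ∫ y in Ioi (0:ℝ), (fun z => χ * G z) (y * τ) := by
      refine setIntegral_congr_fun measurableSet_Ioi ?_
      intro y hy
      have hy' : 0 < y := hy
      have hyt : y * τ / τ = y := by field_simp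
      have hbs : BS k y τ = BS k (y * τ) 1 := by unfold BS; rw [mul_one]
      have hxp : 0 < (y0 * y) ^ (1 - p) / c := by positivity
      simp only [ζ, χ, hG, hu, hx, hyt, hbs]
      rw [show ((1 - p) ^ 2 * ξ ^ 2 * t) = c from rfl, aux_bessel η _ hη hxp]
      have e1 : ((y0 * y) ^ (1 - p) / c / 2) ^ η = (Real.sqrt y0)⁻¹ * y ^ (-(1/2) : ℝ) / (2 * c) ^ η := by
        rw [div_div, mul_comm c 2, Real.div_rpow (by positivity) (by positivity), ← Real.rpow_mul (by positivity), hηp,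
          Real.mul_rpow hy0.le hy'.le, Real.rpow_neg hy0.le, ← Real.sqrt_eq_rpow]
      have e2 : y ^ ((1:ℝ)/2 - 2 * p) * y ^ (-(1/2) : ℝ) = y ^ (-(2*p)) := by
        rw [← Real.rpow_add hy']; congr 1; ring
      have e3 : (y * τ) ^ (-(2 * p)) * τ ^ (2 * p) = y ^ (-(2*p)) := by
        rw [Real.mul_rpow hy'.le hτ0.le, mul_assoc, ← Real.rpow_add hτ0]; simp
      have e4 : 2 * ξ ^ 2 * t * (1 - p) ^ 2 = 2 * c := by rw [hc]; ring
      have e5 : 2 * (1 - p) ^ 2 * ξ ^ 2 * t = 2 * c := by rw [hc]; ring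
      have e6 : Real.exp (-(y ^ (2 * (1 - p)) + y0 ^ (2 * (1 - p))) / (2 * c))
          = Real.exp (-(y0 ^ (2 * (1 - p))) / (2 * c)) * Real.exp (-(y ^ (2 - 2 * p) / (2 * c))) := by
        rw [← Real.exp_add]; congr 1
        rw [show 2 * (1 - p) = 2 - 2 * p by ring]; ring
      rw [e4, e5, e1, e6]
      have hs : 0 < Real.sqrt y0 := Real.sqrt_pos.2 hy0
      have hcη : 0 < (2 * c) ^ η := by positivity
      generalize Real.exp (-(y0 ^ (2 * (1 - p))) / (2 * c)) = E1
      generalize Real.exp (-(y ^ (2 - 2 * p) / (2 * c))) = E2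
      generalize auxR η ((y0 * y) ^ (1 - p) / c) = R
      generalize BS k (y * τ) 1 = b
      trans b * (y ^ ((1:ℝ)/2 - 2 * p) * y ^ (-(1/2) : ℝ)) * E1 * E2 * R / ((p - 1) * ξ ^ 2 * t * Real.Gamma (1 + η) * (2 * c) ^ η)
      · field_simp
      · rw [e2, ← e3]; ring
    rw [h1, integral_comp_mul_right_Ioi (fun z => χ * G z) 0 hτ0, zero_mul, integral_const_mul, smul_eq_mul]
  have hpt : ∀ z : ℝ, 0 < z → |G z - BS k z 1 * z ^ (-(2 * p))| ≤
      Real.exp B * ((BS k z 1 * z ^ (-(4 * p - 2))) * (τ ^ (p - 1) / (2 * c))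
        + (BS k z 1 * z ^ (-(3 * p - 1))) * (τ ^ (p - 1) / (c * y0 ^ (p - 1)))) := by
    intro z hz
    have hb := aux_bs_pos k z hk hz
    have hzt : 0 < z / τ := by positivity
    have hu0 : 0 ≤ u z := by simp only [hu]; positivity
    have hx0 : 0 ≤ x z := by simp only [hx]; positivity
    have hxu : x z ≤ u z + B := by
      simp only [hx, hu, hB]
      rw [Real.mul_rpow hy0.le hzt.le]
      have s1 : (z / τ) ^ (2 - 2 * p) = ((z / τ) ^ (1 - p)) ^ 2 := by
        rw [← Real.rpow_mul_natCast hzt.le]; congr 1; push_cast; ring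
      have s2 : y0 ^ (2 - 2 * p) = (y0 ^ (1 - p)) ^ 2 := by
        rw [← Real.rpow_mul_natCast hy0.le]; congr 1; push_cast; ring
      rw [s1, s2, ← add_div, div_le_div_iff₀ hc0 (by positivity)]
      nlinarith [mul_nonneg hc0.le (sq_nonneg ((z / τ) ^ (1 - p) - y0 ^ (1 - p)))]
    have hcore := aux_core (u z) (x z) B (auxR η (x z)) hu0 hx0 hB0 hxu (auxR_ge η _ hη) (auxR_le η _ hη hx0)
    have hzp : 0 < z ^ (-(2 * p)) := by positivity
    have e0 : G z - BS k z 1 * z ^ (-(2 * p)) = BS k z 1 * z ^ (-(2 * p)) * (Real.exp (-(u z)) * auxR η (x z) - 1) := by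
      simp only [hG]; ring
    rw [e0, abs_mul, abs_of_pos (by positivity)]
    have hule : u z ≤ z ^ (2 - 2 * p) * (τ ^ (p - 1) / (2 * c)) := by
      simp only [hu]
      rw [Real.div_rpow hz.le hτ0.le, div_eq_mul_inv (z ^ (2 - 2 * p)), ← Real.rpow_neg hτ0.le, ← mul_div_assoc]
      have : τ ^ (-(2 - 2 * p)) ≤ τ ^ (p - 1) :=
        Real.rpow_le_rpow_of_exponent_ge hτ0 hτ1.le (by linarith)
      gcongr
    have hxe : x z = z ^ (1 - p) * (τ ^ (p - 1) / (c * y0 ^ (p - 1))) := by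
      simp only [hx]
      rw [Real.mul_rpow hy0.le hzt.le, Real.div_rpow hz.le hτ0.le]
      rw [show (1 - p) = -(p - 1) by ring, Real.rpow_neg hy0.le, Real.rpow_neg hτ0.le]
      field_simp
    have z1 : z ^ (-(4 * p - 2)) = z ^ (-(2 * p)) * z ^ (2 - 2 * p) := by
      rw [← Real.rpow_add hz]; congr 1; ring
    have z2 : z ^ (-(3 * p - 1)) = z ^ (-(2 * p)) * z ^ (1 - p) := by
      rw [← Real.rpow_add hz]; congr 1; ring
    calc _ ≤ BS k z 1 * z ^ (-(2 * p)) * (Real.exp B * (z ^ (2 - 2 * p) * (τ ^ (p - 1) / (2 * c)) + z ^ (1 - p) * (τ ^ (p - 1) / (c * y0 ^ (p - 1))))) := by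
          refine mul_le_mul_of_nonneg_left (hcore.trans ?_) (by positivity)
          rw [← hxe]
          gcongr
      _ = _ := by rw [z1, z2]; ring
  have i1 := aux_int_J k (2 * p) hk (by linarith)
  have i2 := aux_int_J k (4 * p - 2) hk (by linarith)
  have i3 := aux_int_J k (3 * p - 1) hk (by linarith)
  have i4 := i2.mul_const (τ ^ (p - 1) / (2 * c))
  have i5 := i3.mul_const (τ ^ (p - 1) / (c * y0 ^ (p - 1)))
  have i6 := (i4.add i5).const_mul (Real.exp B)
  have iD : IntegrableOn (fun z => G z - BS k z 1 * z ^ (-(2 * p))) (Ioi 0) := by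
    refine Integrable.mono' i6 (hGm.sub ((aux_bs_meas k).mul (by fun_prop))).aestronglyMeasurable ?_
    exact (ae_restrict_iff' measurableSet_Ioi).2 (Eventually.of_forall fun z hz => hpt z hz)
  have iG : IntegrableOn G (Ioi 0) := by
    refine (iD.add i1).congr (Eventually.of_forall fun z => ?_)
    simp
  have hmain : |(∫ z in Ioi (0:ℝ), G z) - J (2 * p)| ≤
      Real.exp B * (J (4 * p - 2) * (τ ^ (p - 1) / (2 * c)) + J (3 * p - 1) * (τ ^ (p - 1) / (c * y0 ^ (p - 1)))) := by
    calc _ = |∫ z in Ioi (0:ℝ), (G z - BS k z 1 * z ^ (-(2 * p)))| := by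
          rw [integral_sub iG i1]
      _ ≤ ∫ z in Ioi (0:ℝ), |G z - BS k z 1 * z ^ (-(2 * p))| := abs_integral_le_integral_abs
      _ ≤ ∫ z in Ioi (0:ℝ), Real.exp B * ((BS k z 1 * z ^ (-(4 * p - 2))) * (τ ^ (p - 1) / (2 * c))
        + (BS k z 1 * z ^ (-(3 * p - 1))) * (τ ^ (p - 1) / (c * y0 ^ (p - 1)))) :=
          setIntegral_mono_on iD.abs i6 measurableSet_Ioi (fun z hz => hpt z hz)
      _ = _ := by
          rw [integral_const_mul, integral_add i4 i5, integral_mul_const, integral_mul_const]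
  rw [eB]
  have eL : C * τ / (χ * J (2 * p)) - 1 = ((∫ z in Ioi (0:ℝ), G z) - J (2 * p)) / J (2 * p) := by
    rw [hCeq]
    field_simp
  rw [eL, abs_div, abs_of_pos hJ, div_le_iff₀ hJ]
  refine hmain.trans (le_of_eq ?_)
  have hy : 0 < y0 ^ (p - 1) := by positivity
  rw [show 2 * ξ ^ 2 * t * (1 - p) ^ 2 = 2 * c by rw [hc]; ring, show ξ ^ 2 * t * (1 - p) ^ 2 = c by rw [hc]; ring]
  have hJ' := hJ.ne'
  generalize J (2 * p) = j1 at hJ' ⊢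
  generalize J (4 * p - 2) = j2
  generalize J (3 * p - 1) = j3
  field_simp
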